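/- Let S and A be nonempty finite sets, γ ∈ [0,1), c ≥ 0, r : S×A → ℝ, π a stationary policy (π(a|s) ≥ 0 and Σ_{a∈A} π(a|s) = 1 for each s), and let P and P' be two transition kernels on S×A such that Σ_{s'∈S} |P(s'|s,a) − P'(s'|s,a)| ≤ ε for every (s,a). Suppose V, V' : S → ℝ satisfy ‖V‖_∞ ≤ c, ‖V'‖_∞ ≤ c, and the Bellman equations V(s) = Σ_{a∈A} π(a|s)·( r(s,a) + γ·Σ_{s'∈S} P(s'|s,a)·V(s') ) and V'(s) = Σ_{a∈A} π(a|s)·( r(s,a) + γ·Σ_{s'∈S} P'(s'|s,a)·V'(s') ) for all s ∈ S. Then max_{s∈S} |V(s) − V'(s)| ≤ ε·c/(1−γ). -/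

import Mathlib

open scoped BigOperators

/-
The Bellman operator of `π` under `P` is a `γ`-contraction for the sup norm, with fixed point `V`.
Replacing `P` by `P'` moves the image of `V'` by at most `γ * ε * ‖V'‖`, so `V'` is an approximate
fixed point of that contraction, and an approximate fixed point is within `(1 - γ)⁻¹` times its
displacement of the true one.
-/

theorem norm_sum_smul_le_sum_norm_mul_norm {ι 𝕜 F : Type*} [Fintype ι] [SeminormedRing 𝕜]
    [SeminormedAddCommGroup F] [Module 𝕜 F] [IsBoundedSMul 𝕜 F] (w : ι → 𝕜) (x : ι → F) :
    ‖∑ i, w i • x i‖ ≤ (∑ i, ‖w i‖) * ‖x‖ := by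
  rw [Finset.sum_mul]
  refine norm_sum_le_of_le _ fun i _ => (norm_smul_le _ _).trans ?_
  gcongr
  exact norm_le_pi_norm x i

theorem sum_norm_eq_one_of_nonneg {ι : Type*} [Fintype ι] {w : ι → ℝ} (hw : ∀ i, 0 ≤ w i)
    (hsum : ∑ i, w i = 1) : ∑ i, ‖w i‖ = 1 := by
  simpa only [Real.norm_of_nonneg (hw _)] using hsum

section

variable {S A E : Type*} [Fintype S] [Fintype A] [NormedAddCommGroup E] [NormedSpace ℝ E]

/-- The Bellman evaluation operator of the policy `π` in the Markov decision process with
transition kernel `P`, reward `r` and discount `γ`; value functions are its fixed points.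
The weights `π s` and `P s a` may be arbitrary real vectors, and rewards lie in a normed space. -/
def bellmanOperator (γ : ℝ) (r : S → A → E) (π : S → A → ℝ) (P : S → A → S → ℝ) (V : S → E) :
    S → E :=
  fun s => ∑ a, π s a • (r s a + γ • ∑ s', P s a s' • V s')

variable {γ ε δ : ℝ} {r : S → A → E} {π : S → A → ℝ} {P P' : S → A → S → ℝ} {V V' : S → E}

theorem norm_bellmanOperator_sub_le (hπ : ∀ s, ∑ a, ‖π s a‖ ≤ 1) (hδ : 0 ≤ δ)
    (h : ∀ s a, ‖∑ s', P s a s' • V s' - ∑ s', P' s a s' • V' s'‖ ≤ δ) :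
    ‖bellmanOperator γ r π P V - bellmanOperator γ r π P' V'‖ ≤ |γ| * δ := by
  refine (pi_norm_le_iff_of_nonneg (by positivity)).2 fun s => ?_
  set d : A → E := fun a => ∑ s', P s a s' • V s' - ∑ s', P' s a s' • V' s'
  have hd : ‖d‖ ≤ δ := (pi_norm_le_iff_of_nonneg hδ).2 (h s)
  have hsub : (bellmanOperator γ r π P V - bellmanOperator γ r π P' V') s =
      γ • ∑ a, π s a • d a := by
    simp only [bellmanOperator, Pi.sub_apply, d, ← Finset.sum_sub_distrib, ← smul_sub,
      add_sub_add_left_eq_sub]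
    simp only [Finset.smul_sum (r := γ), smul_comm γ, smul_sub, Finset.sum_sub_distrib]
  calc ‖(bellmanOperator γ r π P V - bellmanOperator γ r π P' V') s‖
      = |γ| * ‖∑ a, π s a • d a‖ := by rw [hsub, norm_smul, Real.norm_eq_abs]
    _ ≤ |γ| * ((∑ a, ‖π s a‖) * ‖d‖) := by
      gcongr
      exact norm_sum_smul_le_sum_norm_mul_norm _ _
    _ ≤ |γ| * (1 * δ) := by
      gcongr
      exact hπ s
    _ = |γ| * δ := by rw [one_mul]

theorem lipschitzWith_bellmanOperator (hπ : ∀ s, ∑ a, ‖π s a‖ ≤ 1)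
    (hP : ∀ s a, ∑ s', ‖P s a s'‖ ≤ 1) : LipschitzWith ‖γ‖₊ (bellmanOperator γ r π P) := by
  refine LipschitzWith.of_dist_le_mul fun V V' => ?_
  rw [dist_eq_norm, dist_eq_norm]
  refine norm_bellmanOperator_sub_le hπ (norm_nonneg _) fun s a => ?_
  calc ‖∑ s', P s a s' • V s' - ∑ s', P s a s' • V' s'‖
      = ‖∑ s', P s a s' • (V - V') s'‖ := by
        simp only [Pi.sub_apply, smul_sub, Finset.sum_sub_distrib]
    _ ≤ (∑ s', ‖P s a s'‖) * ‖V - V'‖ := norm_sum_smul_le_sum_norm_mul_norm _ _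
    _ ≤ ‖V - V'‖ := mul_le_of_le_one_left (norm_nonneg _) (hP s a)

theorem norm_bellmanOperator_sub_le_of_kernel (hε : 0 ≤ ε) (hπ : ∀ s, ∑ a, ‖π s a‖ ≤ 1)
    (hclose : ∀ s a, ∑ s', ‖P s a s' - P' s a s'‖ ≤ ε) (V : S → E) :
    ‖bellmanOperator γ r π P V - bellmanOperator γ r π P' V‖ ≤ |γ| * (ε * ‖V‖) := by
  refine norm_bellmanOperator_sub_le hπ (by positivity) fun s a => ?_
  calc ‖∑ s', P s a s' • V s' - ∑ s', P' s a s' • V s'‖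
      = ‖∑ s', (P s a s' - P' s a s') • V s'‖ := by
        simp only [sub_smul, Finset.sum_sub_distrib]
    _ ≤ (∑ s', ‖P s a s' - P' s a s'‖) * ‖V‖ := norm_sum_smul_le_sum_norm_mul_norm _ _
    _ ≤ ε * ‖V‖ := by
      gcongr
      exact hclose s a

theorem norm_sub_le_of_isFixedPt_bellmanOperator (hγ : |γ| < 1) (hε : 0 ≤ ε)
    (hπ : ∀ s, ∑ a, ‖π s a‖ ≤ 1) (hP : ∀ s a, ∑ s', ‖P s a s'‖ ≤ 1)
    (hclose : ∀ s a, ∑ s', ‖P s a s' - P' s a s'‖ ≤ ε)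
    (hV : Function.IsFixedPt (bellmanOperator γ r π P) V)
    (hV' : Function.IsFixedPt (bellmanOperator γ r π P') V') :
    ‖V - V'‖ ≤ |γ| * (ε * ‖V'‖) / (1 - |γ|) := by
  have hT : ContractingWith ‖γ‖₊ (bellmanOperator γ r π P) :=
    ⟨hγ, lipschitzWith_bellmanOperator hπ hP⟩
  have hdisp : dist V' (bellmanOperator γ r π P V') ≤ |γ| * (ε * ‖V'‖) := by
    rw [dist_comm, dist_eq_norm]
    nth_rw 2 [← hV'.eq]
    exact norm_bellmanOperator_sub_le_of_kernel hε hπ hclose V'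
  calc ‖V - V'‖ = dist V' V := (dist_eq_norm' V' V).symm
    _ ≤ dist V' (bellmanOperator γ r π P V') / (1 - |γ|) := hT.dist_le_of_fixedPoint V' hV
    _ ≤ |γ| * (ε * ‖V'‖) / (1 - |γ|) := by
      have : 0 ≤ 1 - |γ| := sub_nonneg.2 hγ.le
      gcongr

theorem stmt9_general [Nonempty A] {c : ℝ} (hγ : |γ| < 1) (hπ : ∀ s, ∑ a, ‖π s a‖ ≤ 1)
    (hP : ∀ s a, ∑ s', ‖P s a s'‖ ≤ 1) (hclose : ∀ s a, ∑ s', ‖P s a s' - P' s a s'‖ ≤ ε)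
    (hV'b : ∀ s, ‖V' s‖ ≤ c)
    (hBell : ∀ s, V s = ∑ a, π s a • (r s a + γ • ∑ s', P s a s' • V s'))
    (hBell' : ∀ s, V' s = ∑ a, π s a • (r s a + γ • ∑ s', P' s a s' • V' s')) (s : S) :
    ‖V s - V' s‖ ≤ ε * c / (1 - |γ|) := by
  have hε : 0 ≤ ε :=
    (Finset.sum_nonneg fun _ _ => norm_nonneg _).trans (hclose s (Classical.arbitrary A))
  have hc : 0 ≤ c := (norm_nonneg _).trans (hV'b s)
  have hV : Function.IsFixedPt (bellmanOperator γ r π P) V := funext fun s => (hBell s).symm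
  have hV' : Function.IsFixedPt (bellmanOperator γ r π P') V' := funext fun s => (hBell' s).symm
  calc ‖V s - V' s‖ ≤ ‖V - V'‖ := norm_le_pi_norm (V - V') s
    _ ≤ |γ| * (ε * ‖V'‖) / (1 - |γ|) :=
      norm_sub_le_of_isFixedPt_bellmanOperator hγ hε hπ hP hclose hV hV'
    _ ≤ 1 * (ε * c) / (1 - |γ|) := by
      have : 0 ≤ 1 - |γ| := sub_nonneg.2 hγ.le
      gcongr
      exact (pi_norm_le_iff_of_nonneg hc).2 hV'b
    _ = ε * c / (1 - |γ|) := by rw [one_mul]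

end

/-- Closeness of the value functions of a common stationary policy under
two transition kernels that are `ε`-close in `ℓ¹` distance, via the Bellman equations. -/
theorem stmt9 {S A : Type*} [Fintype S] [Fintype A] [Nonempty S] [Nonempty A]
    (γ ε c : ℝ) (hγ0 : 0 ≤ γ) (hγ1 : γ < 1) (hc : 0 ≤ c)
    (r : S → A → ℝ)
    (π : S → A → ℝ) (hπ0 : ∀ s a, 0 ≤ π s a) (hπ1 : ∀ s, ∑ a, π s a = 1)
    (P P' : S → A → S → ℝ)
    (hP : ∀ s a, (∀ s', 0 ≤ P s a s') ∧ ∑ s', P s a s' = 1)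
    (hP' : ∀ s a, (∀ s', 0 ≤ P' s a s') ∧ ∑ s', P' s a s' = 1)
    (hclose : ∀ s a, ∑ s', |P s a s' - P' s a s'| ≤ ε)
    (V V' : S → ℝ)
    (hVb : ∀ s, |V s| ≤ c) (hV'b : ∀ s, |V' s| ≤ c)
    (hBell : ∀ s, V s = ∑ a, π s a * (r s a + γ * ∑ s', P s a s' * V s'))
    (hBell' : ∀ s, V' s = ∑ a, π s a * (r s a + γ * ∑ s', P' s a s' * V' s')) :
    ∀ s, |V s - V' s| ≤ ε * c / (1 - γ) := by
  have hγ : |γ| = γ := abs_of_nonneg hγ0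
  simpa only [hγ, Real.norm_eq_abs] using stmt9_general (hγ.trans_lt hγ1)
    (fun s => (sum_norm_eq_one_of_nonneg (hπ0 s) (hπ1 s)).le)
    (fun s a => (sum_norm_eq_one_of_nonneg (hP s a).1 (hP s a).2).le) hclose hV'b hBell hBell'
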